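/- arXiv:2305.15173 — 8 statements merged into one kernel-verified Lean document; each statement's English description precedes it below -/
import Mathlib

section
/- Let Π = (MIN, MAX) be an objective decomposition, let s be a scalarizing function for Π, and let q, y ∈ ℝ^p_>. Then there exists a real number λ > 0 such that s(q') = s(y), where q' ∈ ℝ^p_> is defined by q'_i = λ·q_i for all i ∈ MIN and q'_i = (1/λ)·q_i for all i ∈ MAX. -/
open scoped Classical

namespace MOApprox

/-- Membership in the positive orthant `ℝ^p_>`. -/
def Pos (p : ℕ) (y : Fin p → ℝ) : Prop := ∀ i, 0 < y i

/-- Strict component-wise order `<_Π`, where `Π = (MIN, MINᶜ)`. -/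
def ltPi (p : ℕ) (MIN : Set (Fin p)) (y y' : Fin p → ℝ) : Prop :=
  (∀ i ∈ MIN, y i < y' i) ∧ (∀ i ∉ MIN, y' i < y i)

/-- Weak component-wise order `≦_Π`. -/
def leqPi (p : ℕ) (MIN : Set (Fin p)) (y y' : Fin p → ℝ) : Prop :=
  (∀ i ∈ MIN, y i ≤ y' i) ∧ (∀ i ∉ MIN, y' i ≤ y i)

/-- Component-wise order `≤_Π`. -/
def lePi (p : ℕ) (MIN : Set (Fin p)) (y y' : Fin p → ℝ) : Prop :=
  leqPi p MIN y y' ∧ y ≠ y'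

/-- A scalarizing function for the decomposition `(MIN, MINᶜ)`:
continuous on the positive orthant and strictly `Π`-monotone. -/
def Scalarizing (p : ℕ) (MIN : Set (Fin p)) (s : (Fin p → ℝ) → ℝ) : Prop :=
  ContinuousOn s {y | Pos p y} ∧
    ∀ y y', Pos p y → Pos p y' → ltPi p MIN y y' → s y < s y'

/-- Strong `Π`-monotonicity. -/
def StronglyMonotone (p : ℕ) (MIN : Set (Fin p)) (s : (Fin p → ℝ) → ℝ) : Prop :=
  ∀ y y', Pos p y → Pos p y' → lePi p MIN y y' → s y < s y'

/-- Level set of `s` at `y'` (within the positive orthant). -/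
def LevelSet (p : ℕ) (s : (Fin p → ℝ) → ℝ) (y' : Fin p → ℝ) : Set (Fin p → ℝ) :=
  {y | Pos p y ∧ s y = s y'}

/-- `x` is optimal for the scalarizing function `s` in the instance `(X, f)`. -/
def OptimalFor {X : Type*} (p : ℕ) (s : (Fin p → ℝ) → ℝ) (f : X → Fin p → ℝ) (x : X) : Prop :=
  ∀ x', s (f x) ≤ s (f x')

/-- `P` is an optimal solution set for the scalarization `S`. -/
def OptSolSet {X : Type*} (p : ℕ) (S : Set ((Fin p → ℝ) → ℝ)) (f : X → Fin p → ℝ)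
    (P : Set X) : Prop :=
  ∀ s ∈ S, ∃ x ∈ P, OptimalFor p s f x

/-- `x` α-approximates `x'` with respect to the decomposition `(MIN, MINᶜ)`. -/
def Approximates {X : Type*} (p : ℕ) (MIN : Set (Fin p)) (α : ℝ) (f : X → Fin p → ℝ)
    (x x' : X) : Prop :=
  (∀ i ∈ MIN, f x i ≤ α * f x' i) ∧ (∀ i ∉ MIN, (1 / α) * f x' i ≤ f x i)

/-- `P` is an α-approximation set. -/
def ApproxSet {X : Type*} (p : ℕ) (MIN : Set (Fin p)) (α : ℝ) (f : X → Fin p → ℝ)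
    (P : Set X) : Prop :=
  ∀ x' : X, ∃ x ∈ P, Approximates p MIN α f x x'

/-- The flip map `σ^Γ`. -/
noncomputable def flipMap (p : ℕ) (Γ : Set (Fin p)) (y : Fin p → ℝ) : Fin p → ℝ :=
  fun i => if i ∈ Γ then 1 / y i else y i

/-- The `Γ`-transformed decomposition `MIN^Γ = (MIN \ Γ) ∪ (Γ ∩ MAX)`. -/
def transDec (p : ℕ) (MIN Γ : Set (Fin p)) : Set (Fin p) :=
  (MIN \ Γ) ∪ (Γ ∩ MINᶜ)

/-- The component-wise worst-case ratio
`max(max_{i ∈ MIN} y_i/y'_i, max_{i ∈ MAX} y'_i/y_i)`, where a maximum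
over an empty index set is `0` (the convention of `Real.sSup` on `∅`). -/
noncomputable def ratio (p : ℕ) (MIN : Set (Fin p)) (y' y : Fin p → ℝ) : ℝ :=
  max (⨆ i : MIN, y i / y' i) (⨆ i : ↥(MINᶜ), y' i / y i)

/-- `sup R(y', s)`, taken in the extended reals. -/
noncomputable def supRatio (p : ℕ) (MIN : Set (Fin p)) (s : (Fin p → ℝ) → ℝ)
    (y' : Fin p → ℝ) : EReal :=
  sSup ((fun y => ((ratio p MIN y' y : ℝ) : EReal)) '' LevelSet p s y')

/-- The function value of a `p`-dimensional norm, as a predicate. -/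
def IsNorm (p : ℕ) (s : (Fin p → ℝ) → ℝ) : Prop :=
  (∀ y, 0 ≤ s y) ∧ (∀ y, s y = 0 ↔ y = 0) ∧
    (∀ (c : ℝ) (y), s (c • y) = |c| * s y) ∧
    (∀ y z, s (y + z) ≤ s y + s z)

/-- Strict monotonicity on the positive orthant. -/
def StrictMonoOnPos (p : ℕ) (s : (Fin p → ℝ) → ℝ) : Prop :=
  ∀ y y' : Fin p → ℝ, Pos p y → Pos p y' → (∀ i, y i < y' i) → s y < s y'

end MOApprox

/-!
Along the path `c ↦ dilate MIN c q` the continuous function `s` lies below `s y` for small `c` and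
above `s y` for large `c`, by monotonicity; the intermediate value theorem on `(0, ∞)` gives `λ`.
The inverse of `dilate MIN c` is `dilate MIN c⁻¹`, so the bound for small `c` is the one for large
`c` with `q` and `y` exchanged.
-/

open Filter Set

namespace MOApprox

section Dilate

variable {ι : Type*} {MIN : Set ι} {i : ι}

/-- The path `c ↦ q'` of the theorem: minimization coordinates are scaled by `c`, maximization
coordinates by `1 / c`, so that `dilate MIN c y` moves up in the order `<_Π` as `c > 0` grows. -/
noncomputable def dilate (MIN : Set ι) (c : ℝ) (y : ι → ℝ) : ι → ℝ :=
  fun i => if i ∈ MIN then c * y i else (1 / c) * y i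

theorem dilate_apply_of_mem (hi : i ∈ MIN) (c : ℝ) (y : ι → ℝ) :
    dilate MIN c y i = c * y i :=
  if_pos hi

theorem dilate_apply_of_notMem (hi : i ∉ MIN) (c : ℝ) (y : ι → ℝ) :
    dilate MIN c y i = c⁻¹ * y i := by
  rw [dilate, if_neg hi, one_div]

theorem continuousOn_dilate (MIN : Set ι) (y : ι → ℝ) :
    ContinuousOn (fun c => dilate MIN c y) {0}ᶜ := by
  refine continuousOn_pi.2 fun i => ?_
  by_cases hi : i ∈ MIN
  · simp only [dilate_apply_of_mem hi]
    fun_prop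
  · simp only [dilate_apply_of_notMem hi]
    exact continuousOn_inv₀.mul continuousOn_const

end Dilate

variable {p : ℕ} {MIN : Set (Fin p)} {s : (Fin p → ℝ) → ℝ} {y z : Fin p → ℝ} {c : ℝ}

theorem Pos.dilate (hy : Pos p y) (MIN : Set (Fin p)) (hc : 0 < c) :
    Pos p (dilate MIN c y) := by
  intro i
  by_cases hi : i ∈ MIN
  · rw [dilate_apply_of_mem hi]
    exact mul_pos hc (hy i)
  · rw [dilate_apply_of_notMem hi]
    exact mul_pos (inv_pos.2 hc) (hy i)

theorem ltPi_dilate_iff (hc : 0 < c) :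
    ltPi p MIN y (dilate MIN c z) ↔
      (∀ i ∈ MIN, y i < c * z i) ∧ ∀ i ∉ MIN, z i < c * y i := by
  refine and_congr (forall₂_congr fun i hi => ?_) (forall₂_congr fun i hi => ?_)
  · rw [dilate_apply_of_mem hi]
  · rw [dilate_apply_of_notMem hi, inv_mul_lt_iff₀ hc]

theorem dilate_inv_ltPi_iff (hc : 0 < c) :
    ltPi p MIN (dilate MIN c⁻¹ y) z ↔ ltPi p MIN y (dilate MIN c z) := by
  rw [ltPi_dilate_iff hc]
  refine and_congr (forall₂_congr fun i hi => ?_) (forall₂_congr fun i hi => ?_)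
  · rw [dilate_apply_of_mem hi, inv_mul_lt_iff₀ hc]
  · rw [dilate_apply_of_notMem hi, inv_inv]

theorem eventually_ltPi_dilate (MIN : Set (Fin p)) (hy : Pos p y) (hz : Pos p z) :
    ∀ᶠ c in atTop, ltPi p MIN y (dilate MIN c z) := by
  have eventually_lt_mul {a b : Fin p → ℝ} (hb : Pos p b) :
      ∀ᶠ c in atTop, ∀ i, a i < c * b i :=
    eventually_all.2 fun i => (tendsto_id.atTop_mul_const (hb i)).eventually_gt_atTop (a i)
  filter_upwards [eventually_gt_atTop 0, eventually_lt_mul hz, eventually_lt_mul hy]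
    with c hc hyz hzy
  exact (ltPi_dilate_iff hc).2 ⟨fun i _ => hyz i, fun i _ => hzy i⟩

theorem Scalarizing.continuousOn_comp_dilate (hs : Scalarizing p MIN s) (hy : Pos p y) :
    ContinuousOn (fun c => s (dilate MIN c y)) (Ioi 0) :=
  hs.1.comp ((continuousOn_dilate MIN y).mono fun _ hc => ne_of_gt hc)
    fun _ hc => hy.dilate MIN hc

end MOApprox

open MOApprox in
/-- For a scalarizing function `s` for `Π = (MIN, MINᶜ)` and positive
points `q, y`, there is `λ > 0` such that `s q' = s y`, where `q'_i = λ·q_i` for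
`i ∈ MIN` and `q'_i = (1/λ)·q_i` for `i ∈ MAX`. -/
theorem statement0 (p : ℕ) (hp : 1 ≤ p) (MIN : Set (Fin p))
    (s : (Fin p → ℝ) → ℝ) (hs : Scalarizing p MIN s)
    (q y : Fin p → ℝ) (hq : Pos p q) (hy : Pos p y) :
    ∃ lam : ℝ, 0 < lam ∧
      Pos p (fun i => if i ∈ MIN then lam * q i else (1 / lam) * q i) ∧
      s (fun i => if i ∈ MIN then lam * q i else (1 / lam) * q i) = s y := by
  have hpos {c : ℝ} (hc : 0 < c) : Pos p (dilate MIN c q) := hq.dilate MIN hc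
  obtain ⟨c, hc, hyq, hqy⟩ := ((eventually_gt_atTop 0).and
    ((eventually_ltPi_dilate MIN hy hq).and (eventually_ltPi_dilate MIN hq hy))).exists
  have hc' : 0 < c⁻¹ := inv_pos.2 hc
  have lower : s (dilate MIN c⁻¹ q) < s y :=
    hs.2 _ _ (hpos hc') hy ((dilate_inv_ltPi_iff hc).2 hqy)
  have upper : s y < s (dilate MIN c q) := hs.2 _ _ hy (hpos hc) hyq
  obtain ⟨lam, hlam, heq⟩ := isPreconnected_Ioi.intermediate_value hc' hc
    (hs.continuousOn_comp_dilate hq) ⟨lower.le, upper.le⟩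
  exact ⟨lam, hlam, hpos hlam, heq⟩
end

section
/- Let Π = (MIN, MAX) be an objective decomposition, let I = (X, f) be an instance of a p-objective optimization problem of type Π (so X is nonempty and f(X) ⊆ ℝ^p_> is compact), and let s be a scalarizing function for Π. Then there exists a solution x ∈ X that is optimal for s and is also efficient. -/
open scoped Classical

/-!
Every point of a compact set is weakly dominated by a nondominated point of that set. Since `y` is
a limit of points `z` with `z <_Π y`, continuity extends the monotonicity of a scalarizing function
from `<_Π` to the weak order `≦_Π`. Hence a nondominated image that weakly dominates an optimal one
is itself optimal.
-/

namespace MOApprox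

open Set Filter Topology

variable {p : ℕ} {MIN : Set (Fin p)}

theorem leqPi_refl (y : Fin p → ℝ) : leqPi p MIN y y :=
  ⟨fun _ _ => le_rfl, fun _ _ => le_rfl⟩

theorem leqPi.trans {x y z : Fin p → ℝ} (hxy : leqPi p MIN x y) (hyz : leqPi p MIN y z) :
    leqPi p MIN x z :=
  ⟨fun i hi => (hxy.1 i hi).trans (hyz.1 i hi), fun i hi => (hyz.2 i hi).trans (hxy.2 i hi)⟩

theorem ltPi.trans_leqPi {x y z : Fin p → ℝ} (hxy : ltPi p MIN x y) (hyz : leqPi p MIN y z) :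
    ltPi p MIN x z :=
  ⟨fun i hi => (hxy.1 i hi).trans_le (hyz.1 i hi), fun i hi => (hyz.2 i hi).trans_lt (hxy.2 i hi)⟩

theorem isClosed_setOf_leqPi (y : Fin p → ℝ) : IsClosed {z | leqPi p MIN z y} := by
  simp only [leqPi, ofPred_and, ofPred_forall]
  exact (isClosed_biInter fun i _ => isClosed_le (continuous_apply i) continuous_const).inter
    (isClosed_biInter fun i _ => isClosed_le continuous_const (continuous_apply i))

/-- The sum of the objectives, those to be maximized counted negatively: a continuous function
that is strictly increasing for `≤_Π`, used to select nondominated points. -/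
noncomputable def signedSum (p : ℕ) (MIN : Set (Fin p)) (y : Fin p → ℝ) : ℝ :=
  ∑ i, if i ∈ MIN then y i else -y i

theorem continuous_signedSum : Continuous (signedSum p MIN) :=
  continuous_finsetSum _ fun i _ => by split_ifs <;> fun_prop

theorem signedSum_lt_signedSum_of_lePi {y y' : Fin p → ℝ} (h : lePi p MIN y y') :
    signedSum p MIN y < signedSum p MIN y' := by
  obtain ⟨⟨hmin, hmax⟩, hne⟩ := h
  obtain ⟨j, hj⟩ := Function.ne_iff.mp hne
  refine Finset.sum_lt_sum (fun i _ => ?_) ⟨j, Finset.mem_univ j, ?_⟩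
  · split_ifs with hi
    · exact hmin i hi
    · exact neg_le_neg (hmax i hi)
  · split_ifs with hi
    · exact (hmin j hi).lt_of_ne hj
    · exact neg_lt_neg ((hmax j hi).lt_of_ne' hj)

theorem exists_leqPi_forall_not_lePi {K : Set (Fin p → ℝ)} (hK : IsCompact K) {y : Fin p → ℝ}
    (hy : y ∈ K) : ∃ z ∈ K, leqPi p MIN z y ∧ ∀ w ∈ K, ¬ lePi p MIN w z := by
  have hcompact : IsCompact (K ∩ {z | leqPi p MIN z y}) := hK.inter_right (isClosed_setOf_leqPi y)
  obtain ⟨z, ⟨hzK, hzy⟩, hmin⟩ := hcompact.exists_isMinOn ⟨y, hy, leqPi_refl y⟩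
    (continuous_signedSum (MIN := MIN)).continuousOn
  refine ⟨z, hzK, hzy, fun w hwK hwz => ?_⟩
  exact (signedSum_lt_signedSum_of_lePi hwz).not_ge (hmin ⟨hwK, hwz.1.trans hzy⟩)

theorem frequently_ltPi_nhds (y : Fin p → ℝ) : ∃ᶠ z in 𝓝 y, ltPi p MIN z y := by
  let side (i : Fin p) : Filter ℝ := if i ∈ MIN then 𝓝[<] (y i) else 𝓝[>] (y i)
  have side_neBot (i : Fin p) : (side i).NeBot := by
    dsimp only [side]; split_ifs <;> infer_instance
  have pi_side_le : Filter.pi side ≤ 𝓝 y := by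
    rw [nhds_pi]
    refine pi_mono fun i => ?_
    dsimp only [side]; split_ifs <;> exact nhdsWithin_le_nhds
  have eventually_side (i : Fin p) :
      ∀ᶠ t in side i, (i ∈ MIN → t < y i) ∧ (i ∉ MIN → y i < t) := by
    by_cases hi : i ∈ MIN
    · simpa [side, hi] using eventually_mem_nhdsWithin (a := y i) (s := Iio (y i))
    · simpa [side, hi] using eventually_mem_nhdsWithin (a := y i) (s := Ioi (y i))
  have eventually_ltPi : ∀ᶠ z in Filter.pi side, ltPi p MIN z y :=
    (eventually_pi eventually_side).mono fun z hz => ⟨fun i => (hz i).1, fun i => (hz i).2⟩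
  exact eventually_ltPi.frequently.filter_mono pi_side_le

theorem apply_le_apply_of_leqPi {β : Type*} [LinearOrder β] {U : Set (Fin p → ℝ)} (hU : IsOpen U)
    {s : (Fin p → ℝ) → β} (hs : LowerSemicontinuousOn s U)
    (hmono : ∀ y ∈ U, ∀ y' ∈ U, ltPi p MIN y y' → s y ≤ s y') {y y' : Fin p → ℝ}
    (hy : y ∈ U) (hy' : y' ∈ U) (hle : leqPi p MIN y y') : s y ≤ s y' := by
  refine le_of_forall_lt fun c hc => ?_
  have hc_near : ∀ᶠ z in 𝓝 y, c < s z := hU.nhdsWithin_eq hy ▸ hs y hy c hc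
  obtain ⟨z, hzy, hcz, hzU⟩ :=
    ((frequently_ltPi_nhds y).and_eventually (hc_near.and (hU.mem_nhds hy))).exists
  exact hcz.trans_le (hmono z hzU y' hy' (hzy.trans_leqPi hle))

theorem isOpen_setOf_pos : IsOpen {y | Pos p y} := by
  simp only [Pos, ofPred_forall]
  exact isOpen_iInter_of_finite fun i => isOpen_lt continuous_const (continuous_apply i)

end MOApprox

open MOApprox Set in
theorem statement3_general {p : ℕ} {MIN : Set (Fin p)} {X : Type*} [Nonempty X]
    {f : X → Fin p → ℝ} {U : Set (Fin p → ℝ)} (hU : IsOpen U) (hfU : range f ⊆ U)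
    (hcomp : IsCompact (range f)) {β : Type*} [LinearOrder β] {s : (Fin p → ℝ) → β}
    (hs : LowerSemicontinuousOn s U)
    (hmono : ∀ y ∈ U, ∀ y' ∈ U, ltPi p MIN y y' → s y ≤ s y') :
    ∃ x : X, (∀ x', s (f x) ≤ s (f x')) ∧ ¬ ∃ x' : X, lePi p MIN (f x') (f x) := by
  obtain ⟨_, ⟨x₀, rfl⟩, hopt⟩ := (hs.mono hfU).exists_isMinOn (range_nonempty f) hcomp
  obtain ⟨_, ⟨x, rfl⟩, hle, hnondom⟩ :=
    exists_leqPi_forall_not_lePi (MIN := MIN) hcomp (mem_range_self x₀)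
  have hx : s (f x) ≤ s (f x₀) :=
    apply_le_apply_of_leqPi hU hs hmono (hfU (mem_range_self x)) (hfU (mem_range_self x₀)) hle
  exact ⟨x, fun x' => hx.trans (hopt (mem_range_self x')),
    fun ⟨x', hx'⟩ => hnondom (f x') (mem_range_self x') hx'⟩

open MOApprox in
/-- There exists a solution that is optimal for the scalarizing
function `s` and also efficient. -/
theorem statement3 (p : ℕ) (hp : 1 ≤ p) (MIN : Set (Fin p))
    {X : Type*} (hX : Nonempty X) (f : X → Fin p → ℝ)
    (hpos : ∀ x, Pos p (f x)) (hcomp : IsCompact (Set.range f))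
    (s : (Fin p → ℝ) → ℝ) (hs : Scalarizing p MIN s) :
    ∃ x : X, OptimalFor p s f x ∧ ¬ ∃ x' : X, lePi p MIN (f x') (f x) :=
  statement3_general isOpen_setOf_pos (Set.range_subset_iff.mpr hpos) hcomp
    hs.1.lowerSemicontinuousOn fun y hy y' hy' h => (hs.2 y y' hy hy' h).le
end

section
/- Let Π = (MIN, MAX) be an objective decomposition, let S be a scalarization for Π, let I = (X, f) be an instance of a p-objective optimization problem of type Π, let α ≥ 1, and let Γ ⊆ {1,…,p}. Then every optimal solution set for S in I is an α-approximation set for I with respect to Π if and only if every optimal solution set for the Γ-transformed scalarization S^Γ in the Γ-transformed instance I^Γ is an α-approximation set for I^Γ with respect to the Γ-transformed decomposition Π^Γ. -/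
open scoped Classical

/-!
The flip map is an involution, so `s ∘ σ^Γ` takes on the flipped instance exactly the values that
`s` takes on the original one, and the optimal solutions are the same. In a flipped coordinate,
taking reciprocals of positive numbers exchanges `a ≤ α * b` with `(1 / α) * (1 / b) ≤ 1 / a`, i.e.
the condition for minimization with the one for maximization, with the same factor `α`; hence the
same pairs of solutions approximate each other.
-/

namespace MOApprox

section Reciprocal

variable {K : Type*} [Field K] [LinearOrder K] [IsStrictOrderedRing K] {α a b : K}

theorem one_div_le_mul_one_div_iff (hα : 0 < α) (ha : 0 < a) (hb : 0 < b) :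
    1 / a ≤ α * (1 / b) ↔ 1 / α * b ≤ a := by
  rw [mul_one_div, div_le_div_iff₀ ha hb, one_div_mul_eq_div, div_le_iff₀' hα, one_mul]

theorem one_div_mul_one_div_le_one_div_iff (hα : 0 < α) (ha : 0 < a) (hb : 0 < b) :
    1 / α * (1 / b) ≤ 1 / a ↔ a ≤ α * b := by
  rw [one_div_mul_one_div, one_div_le_one_div (mul_pos hα hb) ha]

end Reciprocal

variable {p : ℕ} {MIN Γ : Set (Fin p)} {i : Fin p}

theorem mem_transDec_of_mem (hi : i ∈ Γ) : i ∈ transDec p MIN Γ ↔ i ∉ MIN := by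
  simp [transDec, hi]

theorem mem_transDec_of_notMem (hi : i ∉ Γ) : i ∈ transDec p MIN Γ ↔ i ∈ MIN := by
  simp [transDec, hi]

theorem flipMap_apply_of_mem (hi : i ∈ Γ) (y : Fin p → ℝ) : flipMap p Γ y i = 1 / y i :=
  if_pos hi

theorem flipMap_apply_of_notMem (hi : i ∉ Γ) (y : Fin p → ℝ) : flipMap p Γ y i = y i :=
  if_neg hi

theorem flipMap_involutive (p : ℕ) (Γ : Set (Fin p)) : Function.Involutive (flipMap p Γ) := by
  intro y
  funext i
  by_cases hi : i ∈ Γ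
  · rw [flipMap_apply_of_mem hi, flipMap_apply_of_mem hi, one_div_one_div]
  · rw [flipMap_apply_of_notMem hi, flipMap_apply_of_notMem hi]

variable {X : Type*} {f : X → Fin p → ℝ}

theorem optimalFor_flipMap_iff {s : (Fin p → ℝ) → ℝ} {x : X} :
    OptimalFor p (fun y => s (flipMap p Γ y)) (fun x => flipMap p Γ (f x)) x ↔
      OptimalFor p s f x := by
  simp only [OptimalFor, flipMap_involutive p Γ _]

theorem optSolSet_flipMap_iff {S : Set ((Fin p → ℝ) → ℝ)} {P : Set X} :
    OptSolSet p ((fun s => fun y => s (flipMap p Γ y)) '' S) (fun x => flipMap p Γ (f x)) P ↔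
      OptSolSet p S f P := by
  simp only [OptSolSet, Set.forall_mem_image, optimalFor_flipMap_iff]

variable {α : ℝ}

theorem approximates_flipMap_iff (hα : 0 < α) (hf : ∀ x, ∀ i ∈ Γ, 0 < f x i) {x x' : X} :
    Approximates p (transDec p MIN Γ) α (fun x => flipMap p Γ (f x)) x x' ↔
      Approximates p MIN α f x x' := by
  simp only [Approximates, ← forall_and]
  refine forall_congr' fun i => ?_
  by_cases hi : i ∈ Γ
  · simp only [mem_transDec_of_mem hi, flipMap_apply_of_mem hi, not_not,
      one_div_le_mul_one_div_iff hα (hf x i hi) (hf x' i hi),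
      one_div_mul_one_div_le_one_div_iff hα (hf x i hi) (hf x' i hi)]
    exact and_comm
  · simp only [mem_transDec_of_notMem hi, flipMap_apply_of_notMem hi]

theorem approxSet_flipMap_iff (hα : 0 < α) (hf : ∀ x, ∀ i ∈ Γ, 0 < f x i) {P : Set X} :
    ApproxSet p (transDec p MIN Γ) α (fun x => flipMap p Γ (f x)) P ↔
      ApproxSet p MIN α f P := by
  simp only [ApproxSet, approximates_flipMap_iff hα hf]

end MOApprox

open MOApprox in
theorem statement6_general {p : ℕ} (MIN : Set (Fin p)) (S : Set ((Fin p → ℝ) → ℝ))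
    {X : Type*} (f : X → Fin p → ℝ) {α : ℝ} (hα : 0 < α) {Γ : Set (Fin p)}
    (hf : ∀ x, ∀ i ∈ Γ, 0 < f x i) :
    (∀ P : Set X, OptSolSet p S f P → ApproxSet p MIN α f P) ↔
    (∀ P : Set X,
        OptSolSet p ((fun s => fun y => s (flipMap p Γ y)) '' S)
          (fun x => flipMap p Γ (f x)) P →
        ApproxSet p (transDec p MIN Γ) α (fun x => flipMap p Γ (f x)) P) :=
  forall_congr' fun _ => imp_congr optSolSet_flipMap_iff.symm (approxSet_flipMap_iff hα hf).symm

open MOApprox in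
/-- Every optimal solution set for `S` in `I` is an
`α`-approximation set w.r.t. `Π` iff every optimal solution set for the
`Γ`-transformed scalarization `S^Γ` in the `Γ`-transformed instance `I^Γ` is an
`α`-approximation set w.r.t. `Π^Γ`. -/
theorem statement6 (p : ℕ) (hp : 1 ≤ p) (MIN : Set (Fin p))
    (S : Set ((Fin p → ℝ) → ℝ)) (hS : ∀ s ∈ S, Scalarizing p MIN s)
    {X : Type*} (hX : Nonempty X) (f : X → Fin p → ℝ)
    (hpos : ∀ x, Pos p (f x)) (hcomp : IsCompact (Set.range f))
    (α : ℝ) (hα : 1 ≤ α) (Γ : Set (Fin p)) :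
    (∀ P : Set X, OptSolSet p S f P → ApproxSet p MIN α f P) ↔
    (∀ P : Set X,
        OptSolSet p ((fun s => fun y => s (flipMap p Γ y)) '' S)
          (fun x => flipMap p Γ (f x)) P →
        ApproxSet p (transDec p MIN Γ) α (fun x => flipMap p Γ (f x)) P) := by
  exact statement6_general MIN S f (zero_lt_one.trans_le hα) fun x i _ => hpos x i
end

section
/- Let Π = (MIN, MAX) be an objective decomposition, let I = (X, f) be an instance of a p-objective optimization problem of type Π, let x' ∈ X with y' := f(x'), and let S be a scalarization for Π. For s ∈ S let R(s) := {max(max_{i ∈ MIN} y_i/y'_i, max_{i ∈ MAX} y'_i/y_i) : y ∈ L(y', s)} and suppose that for some s̄ ∈ S the set R(s̄) is bounded above. Let α := inf_{s ∈ S} sup R(s), where suprema are taken in the extended reals (so α is a finite real). Then for every ε > 0 there exists s ∈ S such that every solution x ∈ X optimal for s (α + ε)-approximates x'. Moreover, if the infimum is attained at some s ∈ S, then every solution optimal for that s α-approximates x'. -/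
open scoped Classical

/-!
If `x` is optimal for `s`, then `s (f x) ≤ s (f x')`. Worsening all objectives of `f x` by a common
factor `t ≥ 1` increases `s` continuously until it exceeds `s (f x')`, so for some `t` it hits the
level set of `f x'`, at a point `z`. Since `f x` is at least as good as `z` in every objective, its
worst-case ratio to `f x'` is at most that of `z`, hence at most `sup R(s)`; so `x` approximates
`x'` within every bound on `sup R(s)`.
-/

namespace MOApprox

section Worsen

variable {p : ℕ} {MIN : Set (Fin p)} {s : (Fin p → ℝ) → ℝ} {y y' : Fin p → ℝ} {t : ℝ}

/-- The outcome `y` made worse by the factor `t` in every objective: coordinates to be minimized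
are multiplied by `t`, the others divided. As `t` grows from `1`, it moves continuously from `y`
into the level sets of larger scalarized value. -/
noncomputable def worsen (p : ℕ) (MIN : Set (Fin p)) (t : ℝ) (y : Fin p → ℝ) : Fin p → ℝ :=
  fun i => if i ∈ MIN then y i * t else y i / t

lemma worsen_of_mem {i : Fin p} (hi : i ∈ MIN) : worsen p MIN t y i = y i * t := if_pos hi

lemma worsen_of_notMem {i : Fin p} (hi : i ∉ MIN) : worsen p MIN t y i = y i / t := if_neg hi

lemma worsen_one : worsen p MIN 1 y = y := by
  ext i
  simp [worsen]

lemma Pos.worsen (hy : Pos p y) (ht : 0 < t) : Pos p (worsen p MIN t y) := fun i => by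
  unfold MOApprox.worsen
  split_ifs
  exacts [mul_pos (hy i) ht, div_pos (hy i) ht]

lemma leqPi_worsen (hy : Pos p y) (ht : 1 ≤ t) : leqPi p MIN y (worsen p MIN t y) :=
  ⟨fun i hi => worsen_of_mem hi ▸ le_mul_of_one_le_right (hy i).le ht,
    fun i hi => worsen_of_notMem hi ▸ div_le_self (hy i).le ht⟩

lemma eventually_ltPi_worsen (hy : Pos p y) (hy' : Pos p y') :
    ∀ᶠ t in Filter.atTop, ltPi p MIN y' (worsen p MIN t y) := by
  have hmin (i : Fin p) : ∀ᶠ t in Filter.atTop, y' i < y i * t :=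
    (Filter.tendsto_id.const_mul_atTop (hy i)).eventually_gt_atTop (y' i)
  have hmax (i : Fin p) : ∀ᶠ t in Filter.atTop, y i / t < y' i :=
    (tendsto_const_nhds.div_atTop Filter.tendsto_id).eventually_lt_const (hy' i)
  filter_upwards [Filter.eventually_all.2 hmin, Filter.eventually_all.2 hmax] with t htmin htmax
  exact ⟨fun i hi => worsen_of_mem hi ▸ htmin i, fun i hi => worsen_of_notMem hi ▸ htmax i⟩

lemma continuousOn_worsen : ContinuousOn (fun t => worsen p MIN t y) (Set.Ioi 0) := by
  refine continuousOn_pi.2 fun i => ?_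
  by_cases hi : i ∈ MIN
  · simp only [worsen_of_mem hi]
    fun_prop
  · simp only [worsen_of_notMem hi]
    exact continuousOn_const.div continuousOn_id fun t ht => ht.ne'

lemma Scalarizing.exists_mem_levelSet_leqPi (hs : Scalarizing p MIN s) (hy : Pos p y)
    (hy' : Pos p y') (hle : s y ≤ s y') : ∃ z ∈ LevelSet p s y', leqPi p MIN y z := by
  obtain ⟨T, hT, hlt⟩ :=
    ((Filter.eventually_ge_atTop 1).and (eventually_ltPi_worsen (MIN := MIN) hy hy')).exists
  have pos_of_mem : ∀ t ∈ Set.Icc 1 T, 0 < t := fun t ht => one_pos.trans_le ht.1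
  have hcont : ContinuousOn (fun t => s (worsen p MIN t y)) (Set.Icc 1 T) :=
    hs.1.comp (continuousOn_worsen.mono pos_of_mem) fun t ht => hy.worsen (pos_of_mem t ht)
  have hstart : s (worsen p MIN 1 y) ≤ s y' := by rwa [worsen_one]
  have hend : s y' ≤ s (worsen p MIN T y) :=
    (hs.2 _ _ hy' (hy.worsen (one_pos.trans_le hT)) hlt).le
  obtain ⟨t, ht, hst⟩ := intermediate_value_Icc hT hcont ⟨hstart, hend⟩
  exact ⟨worsen p MIN t y, ⟨hy.worsen (pos_of_mem t ht), hst⟩, leqPi_worsen hy ht.1⟩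

end Worsen

section Ratio

variable {p : ℕ} {MIN : Set (Fin p)} {s : (Fin p → ℝ) → ℝ} {y y' z : Fin p → ℝ}

lemma div_le_ratio_of_mem {i : Fin p} (hi : i ∈ MIN) : y i / y' i ≤ ratio p MIN y' y :=
  (le_ciSup (f := fun j : MIN => y j / y' j) (Set.finite_range _).bddAbove ⟨i, hi⟩).trans
    (le_max_left _ _)

lemma div_le_ratio_of_notMem {i : Fin p} (hi : i ∉ MIN) : y' i / y i ≤ ratio p MIN y' y :=
  (le_ciSup (f := fun j : ↥(MINᶜ) => y' j / y j) (Set.finite_range _).bddAbove ⟨i, hi⟩).trans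
    (le_max_right _ _)

lemma ratio_nonneg (hy' : Pos p y') (hy : Pos p y) : 0 ≤ ratio p MIN y' y :=
  le_max_of_le_left (Real.iSup_nonneg fun i => (div_pos (hy i) (hy' i)).le)

lemma ratio_le_ratio_of_leqPi (hy' : Pos p y') (hz : Pos p z) (hyz : leqPi p MIN y z) :
    ratio p MIN y' y ≤ ratio p MIN y' z :=
  max_le_max
    (ciSup_mono (Set.finite_range _).bddAbove fun i =>
      div_le_div_of_nonneg_right (hyz.1 i i.2) (hy' i).le)
    (ciSup_mono (Set.finite_range _).bddAbove fun i =>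
      div_le_div_of_nonneg_left (hy' i).le (hz i) (hyz.2 i i.2))

lemma approximates_of_ratio_le {X : Type*} {f : X → Fin p → ℝ} {x x' : X} {β : ℝ}
    (hx : Pos p (f x)) (hx' : Pos p (f x')) (hβ : ratio p MIN (f x') (f x) ≤ β) :
    Approximates p MIN β f x x' := by
  refine ⟨fun i hi => (div_le_iff₀ (hx' i)).1 ((div_le_ratio_of_mem hi).trans hβ), fun i hi => ?_⟩
  have hdiv : f x' i / f x i ≤ β := (div_le_ratio_of_notMem hi).trans hβ
  have hβ_pos : 0 < β := (div_pos (hx' i) (hx i)).trans_le hdiv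
  rw [one_div, inv_mul_le_iff₀ hβ_pos]
  exact (div_le_iff₀ (hx i)).1 hdiv

lemma ratio_le_supRatio_of_mem (hy : y ∈ LevelSet p s y') :
    (ratio p MIN y' y : EReal) ≤ supRatio p MIN s y' :=
  le_sSup (Set.mem_image_of_mem _ hy)

lemma supRatio_nonneg (hy' : Pos p y') : 0 ≤ supRatio p MIN s y' :=
  (EReal.coe_nonneg.2 (ratio_nonneg hy' hy')).trans (ratio_le_supRatio_of_mem ⟨hy', rfl⟩)

lemma supRatio_ne_top (hbdd : BddAbove (ratio p MIN y' '' LevelSet p s y')) :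
    supRatio p MIN s y' ≠ ⊤ := by
  obtain ⟨B, hB⟩ := hbdd
  refine ne_top_of_le_ne_top (EReal.coe_ne_top B) (sSup_le ?_)
  rintro _ ⟨y, hy, rfl⟩
  exact EReal.coe_le_coe (hB (Set.mem_image_of_mem _ hy))

lemma coe_toReal_iInf_supRatio {S : Set ((Fin p → ℝ) → ℝ)} (hy' : Pos p y')
    (hbdd : ∃ s ∈ S, BddAbove (ratio p MIN y' '' LevelSet p s y')) :
    ((⨅ s ∈ S, supRatio p MIN s y').toReal : EReal) = ⨅ s ∈ S, supRatio p MIN s y' := by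
  obtain ⟨s, hs, hbdd⟩ := hbdd
  refine EReal.coe_toReal (ne_top_of_le_ne_top (supRatio_ne_top hbdd) (iInf₂_le s hs)) ?_
  exact ne_bot_of_le_ne_bot EReal.zero_ne_bot (le_iInf₂ fun _ _ => supRatio_nonneg hy')

lemma Scalarizing.ratio_le_supRatio (hs : Scalarizing p MIN s) (hy : Pos p y) (hy' : Pos p y')
    (hle : s y ≤ s y') : (ratio p MIN y' y : EReal) ≤ supRatio p MIN s y' := by
  obtain ⟨z, hz, hyz⟩ := hs.exists_mem_levelSet_leqPi hy hy' hle
  have hratio : ratio p MIN y' y ≤ ratio p MIN y' z := ratio_le_ratio_of_leqPi hy' hz.1 hyz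
  exact (EReal.coe_le_coe hratio).trans (ratio_le_supRatio_of_mem hz)

lemma OptimalFor.approximates {X : Type*} {f : X → Fin p → ℝ} {x x' : X} {β : ℝ}
    (hopt : OptimalFor p s f x) (hs : Scalarizing p MIN s) (hx : Pos p (f x)) (hx' : Pos p (f x'))
    (hβ : supRatio p MIN s (f x') ≤ β) : Approximates p MIN β f x x' :=
  approximates_of_ratio_le hx hx' <|
    EReal.coe_le_coe_iff.1 ((hs.ratio_le_supRatio hx hx' (hopt x')).trans hβ)

end Ratio

end MOApprox

open MOApprox in
theorem statement10_general (p : ℕ) (MIN : Set (Fin p)) {X : Type*} (f : X → Fin p → ℝ)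
    (hpos : ∀ x, Pos p (f x)) (x' : X) (S : Set ((Fin p → ℝ) → ℝ))
    (hS : ∀ s ∈ S, Scalarizing p MIN s)
    (hbdd : ∃ sbar ∈ S, BddAbove (ratio p MIN (f x') '' LevelSet p sbar (f x'))) :
    (∀ ε : ℝ, 0 < ε → ∃ s ∈ S, ∀ x : X, OptimalFor p s f x →
        Approximates p MIN
          ((⨅ s' ∈ S, supRatio p MIN s' (f x')).toReal + ε) f x x') ∧
    (∀ s ∈ S, supRatio p MIN s (f x') = (⨅ s' ∈ S, supRatio p MIN s' (f x')) →
        ∀ x : X, OptimalFor p s f x →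
          Approximates p MIN
            ((⨅ s' ∈ S, supRatio p MIN s' (f x')).toReal) f x x') := by
  have hα := coe_toReal_iInf_supRatio (hpos x') hbdd
  refine ⟨fun ε hε => ?_, fun s hs hattained x hopt => ?_⟩
  · have hlt : ⨅ s' ∈ S, supRatio p MIN s' (f x') <
        (((⨅ s' ∈ S, supRatio p MIN s' (f x')).toReal + ε : ℝ) : EReal) :=
      hα.symm.trans_lt (EReal.coe_lt_coe (lt_add_of_pos_right _ hε))
    obtain ⟨s, hs, hsup⟩ : ∃ s ∈ S, supRatio p MIN s (f x') < _ := by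
      simpa only [iInf_lt_iff, exists_prop] using hlt
    exact ⟨s, hs, fun x hopt => hopt.approximates (hS s hs) (hpos x) (hpos x') hsup.le⟩
  · exact hopt.approximates (hS s hs) (hpos x) (hpos x') (hattained.trans hα.symm).le

open MOApprox in
/-- Let `α := inf_{s ∈ S} sup R(s)` (suprema in the extended
reals), where `R(s)` is bounded above for at least one `s̄ ∈ S`. Then for every
`ε > 0` there is an `s ∈ S` such that every solution optimal for `s`
`(α + ε)`-approximates `x'`; and if the infimum is attained at some `s ∈ S`,
every solution optimal for that `s` `α`-approximates `x'`. -/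
theorem statement10 (p : ℕ) (hp : 1 ≤ p) (MIN : Set (Fin p))
    {X : Type*} (hX : Nonempty X) (f : X → Fin p → ℝ)
    (hpos : ∀ x, Pos p (f x)) (hcomp : IsCompact (Set.range f))
    (x' : X) (S : Set ((Fin p → ℝ) → ℝ)) (hS : ∀ s ∈ S, Scalarizing p MIN s)
    (hbdd : ∃ sbar ∈ S, BddAbove (ratio p MIN (f x') '' LevelSet p sbar (f x'))) :
    (∀ ε : ℝ, 0 < ε → ∃ s ∈ S, ∀ x : X, OptimalFor p s f x →
        Approximates p MIN
          ((⨅ s' ∈ S, supRatio p MIN s' (f x')).toReal + ε) f x x') ∧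
    (∀ s ∈ S, supRatio p MIN s (f x') = (⨅ s' ∈ S, supRatio p MIN s' (f x')) →
        ∀ x : X, OptimalFor p s f x →
          Approximates p MIN
            ((⨅ s' ∈ S, supRatio p MIN s' (f x')).toReal) f x x') :=
  statement10_general p MIN f hpos x' S hS hbdd
end

section
/- Let Π = (MIN, MAX) be an objective decomposition, let s be a scalarizing function for Π, and let S = {s_w : w ∈ ℝ^p_>} be the weighted scalarization induced by W = ℝ^p_> and s, where s_w(y) := s(w_1·y_1, …, w_p·y_p). For y' ∈ ℝ^p_> and any scalarizing function s' let R(y', s') := {max(max_{i ∈ MIN} y_i/y'_i, max_{i ∈ MAX} y'_i/y_i) : y ∈ L(y', s')}. Define, in the extended reals, α := sup_{y' ∈ ℝ^p_>} inf_{s' ∈ S} sup R(y', s') and β := inf_{ȳ ∈ ℝ^p_>} sup R(ȳ, s). Then α = β. -/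
open scoped Classical

/-!
The positive orthant is a group under componentwise multiplication, and the ratios `y_i / y'_i` are
unchanged when both points are multiplied by the same weight. Multiplication by `w` carries the
level set of `s_w` at `y'` onto the level set of `s` at `w * y'`, so `sup R(y', s_w)` equals
`sup R(w * y', s)`. For fixed `y'` the point `w * y'` runs over the whole orthant as `w` does; the
inner infimum in `α` is therefore `β` for every `y'`.
-/

namespace MOApprox

/-- The weighted function `s_w : y ↦ s (w_1·y_1, …, w_p·y_p)`, with the weights entering through
the pointwise product of `Fin p → ℝ`. -/
def weighted {p : ℕ} (s : (Fin p → ℝ) → ℝ) (w : Fin p → ℝ) : (Fin p → ℝ) → ℝ :=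
  fun y => s (w * y)

variable {p : ℕ} {w y y' : Fin p → ℝ}

theorem Pos.isUnit (hw : Pos p w) : IsUnit w :=
  Pi.isUnit_iff.2 fun i => (hw i).ne'.isUnit

theorem Pos.mul_iff_right (hw : Pos p w) : Pos p (w * y) ↔ Pos p y :=
  forall_congr' fun i => mul_pos_iff_of_pos_left (hw i)

theorem Pos.image_mul_right (hy : Pos p y) : (· * y) '' {w | Pos p w} = {w | Pos p w} := by
  have preimage_eq : (· * y) ⁻¹' {w | Pos p w} = {w | Pos p w} := by
    ext w
    simp only [Set.mem_preimage, Set.mem_ofPred_eq, mul_comm w y, hy.mul_iff_right]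
  conv_lhs => rw [← preimage_eq]
  exact Set.image_preimage_eq _ (IsUnit.isUnit_iff_mulRight_bijective.1 hy.isUnit).surjective

theorem image_mul_left_levelSet_weighted (s : (Fin p → ℝ) → ℝ) (hw : Pos p w) :
    (w * ·) '' LevelSet p (weighted s w) y' = LevelSet p s (w * y') := by
  have preimage_eq : LevelSet p (weighted s w) y' = (w * ·) ⁻¹' LevelSet p s (w * y') :=
    Set.ext fun _ => and_congr_left' hw.mul_iff_right.symm
  rw [preimage_eq]
  exact Set.image_preimage_eq _ (IsUnit.isUnit_iff_mulLeft_bijective.1 hw.isUnit).surjective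

theorem ratio_mul_left (MIN : Set (Fin p)) (hw : IsUnit w) :
    ratio p MIN (w * y') (w * y) = ratio p MIN y' y := by
  have ne_zero (i : Fin p) : w i ≠ 0 := (Pi.isUnit_iff.1 hw i).ne_zero
  simp only [ratio, Pi.mul_apply, mul_div_mul_left _ _ (ne_zero _)]

theorem supRatio_weighted (MIN : Set (Fin p)) (s : (Fin p → ℝ) → ℝ) (hw : Pos p w) :
    supRatio p MIN (weighted s w) y' = supRatio p MIN s (w * y') := by
  simp only [supRatio, ← image_mul_left_levelSet_weighted s hw, Set.image_image,
    ratio_mul_left MIN hw.isUnit]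

theorem iInf_supRatio_weighted (MIN : Set (Fin p)) (s : (Fin p → ℝ) → ℝ) (hy' : Pos p y') :
    ⨅ s' ∈ weighted s '' {w | Pos p w}, supRatio p MIN s' y' =
      ⨅ ybar ∈ {y | Pos p y}, supRatio p MIN s ybar :=
  calc
    ⨅ s' ∈ weighted s '' {w | Pos p w}, supRatio p MIN s' y'
    _ = ⨅ w ∈ {w | Pos p w}, supRatio p MIN (weighted s w) y' := iInf_image
    _ = ⨅ w ∈ {w | Pos p w}, supRatio p MIN s (w * y') :=
      biInf_congr fun _ hw => supRatio_weighted MIN s hw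
    _ = ⨅ ybar ∈ (· * y') '' {w | Pos p w}, supRatio p MIN s ybar := iInf_image.symm
    _ = ⨅ ybar ∈ {y | Pos p y}, supRatio p MIN s ybar := by rw [hy'.image_mul_right]

end MOApprox

open MOApprox in
theorem statement12_general (p : ℕ) (MIN : Set (Fin p)) (s : (Fin p → ℝ) → ℝ) :
    ⨆ y' ∈ {y | Pos p y}, ⨅ s' ∈ weighted s '' {w | Pos p w}, supRatio p MIN s' y' =
      ⨅ ybar ∈ {y | Pos p y}, supRatio p MIN s ybar :=
  have nonempty_pos : {y : Fin p → ℝ | Pos p y}.Nonempty := ⟨1, fun _ => one_pos⟩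
  (biSup_congr fun _ hy' => iInf_supRatio_weighted MIN s hy').trans (biSup_const nonempty_pos)

open MOApprox in
/-- For the weighted scalarization `S = {s_w : w ∈ ℝ^p_>}` with
`s_w(y) = s(w_1·y_1, …, w_p·y_p)`,
`α := sup_{y'} inf_{s' ∈ S} sup R(y', s')` equals
`β := inf_{ȳ} sup R(ȳ, s)` (both taken in the extended reals). -/
theorem statement12 (p : ℕ) (hp : 1 ≤ p) (MIN : Set (Fin p))
    (s : (Fin p → ℝ) → ℝ) (hs : Scalarizing p MIN s) :
    (⨆ y' ∈ {y : Fin p → ℝ | Pos p y},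
        ⨅ s' ∈ ((fun (w : Fin p → ℝ) => fun (y : Fin p → ℝ) => s (fun i => w i * y i)) ''
          {w : Fin p → ℝ | Pos p w}),
          supRatio p MIN s' y')
      = ⨅ ybar ∈ {y : Fin p → ℝ | Pos p y}, supRatio p MIN s ybar :=
  statement12_general p MIN s
end

section
/- Let s : ℝ^p → ℝ be a norm that is strictly monotone on the positive orthant, and for ȳ ∈ ℝ^p_> let L(ȳ, s) := {y ∈ ℝ^p_> : s(y) = s(ȳ)}. Then inf_{ȳ ∈ ℝ^p_>} sup{ max_{i=1,…,p} y*_i/ȳ_i : y* ∈ L(ȳ, s) } = s(1/s(e^1), …, 1/s(e^p)), and the infimum is attained at ȳ = (1/s(e^1), …, 1/s(e^p)). -/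
open scoped Classical

/-!
Write `u i = 1 / s (e i)`. Monotonicity gives `y i * s (e i) ≤ s y`, so on the level set of `ybar`
every ratio `y i / ybar i` is at most `s ybar * (u i / ybar i)`; this bound is approached by
rescaled points of the open orthant close to `e i`. The inner supremum is therefore `m * s ybar`
with `m = max i, u i / ybar i`. Since `u ≤ m • ybar`, it is at least `s u`, with equality at
`ybar = u`, where `m = 1`.
-/

namespace MOApprox

section Orthant

theorem closure_setOf_strongLT {ι : Type*} {π : ι → Type*} [∀ i, TopologicalSpace (π i)]
    [∀ i, LinearOrder (π i)] [∀ i, OrderTopology (π i)] [∀ i, DenselyOrdered (π i)]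
    [∀ i, NoMaxOrder (π i)] (a : ∀ i, π i) : closure {y | StrongLT a y} = Set.Ici a := by
  have orthant_eq_pi : {y | StrongLT a y} = Set.univ.pi fun i => Set.Ioi (a i) := by
    ext y
    simp [StrongLT]
  simp only [orthant_eq_pi, closure_pi_set, closure_Ioi, Set.pi_univ_Ici]

theorem monotoneOn_Ici_zero_of_strongLT {ι β : Type*} [TopologicalSpace β] [Preorder β]
    [OrderClosedTopology β] {s : (ι → ℝ) → β} (hcont : ContinuousOn s (Set.Ici 0))
    (hmono : ∀ y y', StrongLT 0 y → StrongLT y y' → s y ≤ s y') :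
    MonotoneOn s (Set.Ici 0) := by
  intro y hy y' _ hyy'
  let O : Set (ι → ℝ) := {y | StrongLT 0 y}
  have closure_eq : closure (O ×ˢ O) = Set.Ici 0 ×ˢ Set.Ici 0 := by
    rw [closure_prod_eq, closure_setOf_strongLT]
  have le_add : ∀ z ∈ O ×ˢ O, s z.1 ≤ s (z.1 + z.2) := fun z hz =>
    hmono _ _ hz.1 fun i => lt_add_of_pos_right _ (hz.2 i)
  have cont_fst : ContinuousOn (fun z : (ι → ℝ) × (ι → ℝ) => s z.1) (closure (O ×ˢ O)) :=
    closure_eq ▸ hcont.comp continuousOn_fst fun _ hz => hz.1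
  have cont_add :
      ContinuousOn (fun z : (ι → ℝ) × (ι → ℝ) => s (z.1 + z.2)) (closure (O ×ˢ O)) :=
    closure_eq ▸ hcont.comp (continuous_fst.add continuous_snd).continuousOn
      fun _ hz => Set.mem_Ici.2 (add_nonneg hz.1 hz.2)
  have mem_closure : (y, y' - y) ∈ closure (O ×ˢ O) := closure_eq ▸ ⟨hy, sub_nonneg.2 hyy'⟩
  simpa only [add_sub_cancel] using le_on_closure le_add cont_fst cont_add mem_closure

end Orthant

section Gauge

variable {ι : Type*}

/-- The worst-case ratios `max_i y_i / ybar_i` of the points `y` of the open orthant on the level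
set of `s` through `ybar`. -/
def levelRatios (s : (ι → ℝ) → ℝ) (ybar : ι → ℝ) : Set ℝ :=
  (fun y => ⨆ i, y i / ybar i) '' {y | StrongLT 0 y ∧ s y = s ybar}

variable [DecidableEq ι]

/-- A homogeneous monotone gauge on the closed orthant, extended arbitrarily to the whole space so
that norms qualify as they are. Convexity is not part of the notion: the `ℓ^q` quasi-norms with
`q < 1` are included. -/
structure IsMonotoneGauge (s : (ι → ℝ) → ℝ) : Prop where
  continuousOn : ContinuousOn s (Set.Ici 0)
  map_smul : ∀ {c : ℝ} {y : ι → ℝ}, 0 < c → 0 ≤ y → s (c • y) = c * s y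
  monotoneOn : MonotoneOn s (Set.Ici 0)
  single_pos : ∀ i, 0 < s (Pi.single i 1)

/-- The vector whose `i`-th entry is the coordinate at which the unit sphere of `s` meets the
positive `i`-th axis; it is the optimal reference point. -/
noncomputable def axisIntercepts (s : (ι → ℝ) → ℝ) : ι → ℝ :=
  fun i => 1 / s (Pi.single i 1)

namespace IsMonotoneGauge

variable {s : (ι → ℝ) → ℝ} {y ybar : ι → ℝ}

theorem axisIntercepts_pos (hs : IsMonotoneGauge s) : StrongLT 0 (axisIntercepts s) :=
  fun i => one_div_pos.2 (hs.single_pos i)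

theorem mul_single_le (hs : IsMonotoneGauge s) (hy : StrongLT 0 y) (i : ι) :
    y i * s (Pi.single i 1) ≤ s y := by
  have single_nonneg : (0 : ι → ℝ) ≤ Pi.single i 1 := Pi.single_nonneg.2 zero_le_one
  have smul_single_le : y i • Pi.single i 1 ≤ y := by
    intro j
    obtain rfl | hji := eq_or_ne j i
    · simp
    · simpa [hji] using (hy j).le
  rw [← hs.map_smul (hy i) single_nonneg]
  exact hs.monotoneOn (smul_nonneg (hy i).le single_nonneg) hy.le smul_single_le

theorem pos [Nonempty ι] (hs : IsMonotoneGauge s) (hy : StrongLT 0 y) : 0 < s y :=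
  let i := Classical.arbitrary ι
  (mul_pos (hy i) (hs.single_pos i)).trans_le (hs.mul_single_le hy i)

theorem le_mul_iSup_div [Finite ι] [Nonempty ι] (hs : IsMonotoneGauge s)
    (hy : StrongLT 0 y) (hybar : StrongLT 0 ybar) : s y ≤ s ybar * ⨆ i, y i / ybar i := by
  have ratio_le (i : ι) : y i / ybar i ≤ ⨆ j, y j / ybar j :=
    Finite.le_ciSup (fun j => y j / ybar j) i
  have iSup_pos : 0 < ⨆ i, y i / ybar i :=
    let i := Classical.arbitrary ι
    (div_pos (hy i) (hybar i)).trans_le (ratio_le i)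
  have le_smul : y ≤ (⨆ i, y i / ybar i) • ybar := fun i =>
    (div_le_iff₀ (hybar i)).1 (ratio_le i)
  calc s y ≤ s ((⨆ i, y i / ybar i) • ybar) :=
        hs.monotoneOn hy.le (smul_nonneg iSup_pos.le hybar.le) le_smul
    _ = s ybar * ⨆ i, y i / ybar i := by rw [hs.map_smul iSup_pos hybar.le, mul_comm]

theorem mul_apply_le_of_mem_upperBounds [Finite ι] (hs : IsMonotoneGauge s)
    (hybar : StrongLT 0 ybar) {b : ℝ} (hb : b ∈ upperBounds (levelRatios s ybar))
    (hy : StrongLT 0 y) (i : ι) : s ybar * y i ≤ b * ybar i * s y := by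
  have : Nonempty ι := ⟨i⟩
  have scale_pos : 0 < s ybar / s y := div_pos (hs.pos hybar) (hs.pos hy)
  have scaled_mem : StrongLT 0 ((s ybar / s y) • y) ∧ s ((s ybar / s y) • y) = s ybar :=
    ⟨fun j => mul_pos scale_pos (hy j),
      by rw [hs.map_smul scale_pos hy.le, div_mul_cancel₀ _ (hs.pos hy).ne']⟩
  have ratio_le : s ybar / s y * y i / ybar i ≤ b :=
    (Finite.le_ciSup (fun j => ((s ybar / s y) • y) j / ybar j) i).trans (hb ⟨_, scaled_mem, rfl⟩)
  rwa [div_le_iff₀ (hybar i), div_mul_eq_mul_div, div_le_iff₀ (hs.pos hy)] at ratio_le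

theorem le_mul_single_of_mem_upperBounds [Finite ι] (hs : IsMonotoneGauge s)
    (hybar : StrongLT 0 ybar) {b : ℝ} (hb : b ∈ upperBounds (levelRatios s ybar)) (i : ι) :
    s ybar ≤ b * ybar i * s (Pi.single i 1) := by
  have closure_eq : closure {y : ι → ℝ | StrongLT 0 y} = Set.Ici 0 := closure_setOf_strongLT 0
  have single_mem : Pi.single i 1 ∈ closure {y : ι → ℝ | StrongLT 0 y} :=
    closure_eq ▸ Pi.single_nonneg.2 zero_le_one
  have le_on_orthant : ∀ z ∈ {y : ι → ℝ | StrongLT 0 y}, s ybar * z i ≤ b * ybar i * s z :=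
    fun _ hz => hs.mul_apply_le_of_mem_upperBounds hybar hb hz i
  have cont_apply : Continuous fun z : ι → ℝ => s ybar * z i :=
    continuous_const.mul (continuous_apply i)
  have hle := le_on_closure le_on_orthant cont_apply.continuousOn
    (continuousOn_const.mul (closure_eq ▸ hs.continuousOn)) single_mem
  simpa only [Pi.single_eq_same, mul_one] using hle

theorem isLUB_levelRatios [Finite ι] [Nonempty ι] (hs : IsMonotoneGauge s)
    (hybar : StrongLT 0 ybar) :
    IsLUB (levelRatios s ybar) (s ybar * ⨆ i, axisIntercepts s i / ybar i) := by
  refine ⟨?_, fun b hb => ?_⟩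
  · rintro _ ⟨y, ⟨hy, level_eq⟩, rfl⟩
    refine ciSup_le fun i => ?_
    have apply_le : y i ≤ s ybar * axisIntercepts s i := by
      rw [axisIntercepts, mul_one_div, le_div_iff₀ (hs.single_pos i), ← level_eq]
      exact hs.mul_single_le hy i
    calc y i / ybar i ≤ s ybar * axisIntercepts s i / ybar i :=
          div_le_div_of_nonneg_right apply_le (hybar i).le
      _ = s ybar * (axisIntercepts s i / ybar i) := mul_div_assoc _ _ _
      _ ≤ s ybar * ⨆ j, axisIntercepts s j / ybar j :=
          mul_le_mul_of_nonneg_left (Finite.le_ciSup (fun j => axisIntercepts s j / ybar j) i)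
            (hs.pos hybar).le
  · obtain ⟨i, hi⟩ := exists_eq_ciSup_of_finite (f := fun i => axisIntercepts s i / ybar i)
    rw [← hi, axisIntercepts, ← mul_div_assoc, mul_one_div, div_le_iff₀ (hybar i),
      div_le_iff₀ (hs.single_pos i)]
    exact hs.le_mul_single_of_mem_upperBounds hybar hb i

theorem sSup_levelRatios [Finite ι] [Nonempty ι] (hs : IsMonotoneGauge s)
    (hybar : StrongLT 0 ybar) :
    sSup (levelRatios s ybar) = s ybar * ⨆ i, axisIntercepts s i / ybar i :=
  (hs.isLUB_levelRatios hybar).csSup_eq ⟨_, ybar, ⟨hybar, rfl⟩, rfl⟩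

end IsMonotoneGauge

end Gauge

section Norm

variable {p : ℕ} {s : (Fin p → ℝ) → ℝ}

theorem IsNorm.continuous (hnorm : IsNorm p s) : Continuous s :=
  let ⟨_, _, map_smul, add_le⟩ := hnorm
  (Seminorm.of (𝕜 := ℝ) s add_le map_smul).convexOn.locallyLipschitz.continuous

theorem IsNorm.pos (hnorm : IsNorm p s) {y : Fin p → ℝ} (hy : y ≠ 0) : 0 < s y :=
  (hnorm.1 y).lt_of_ne' (mt (hnorm.2.1 y).1 hy)

theorem IsNorm.isMonotoneGauge (hnorm : IsNorm p s) (hmono : StrictMonoOnPos p s) :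
    IsMonotoneGauge s where
  continuousOn := hnorm.continuous.continuousOn
  map_smul hc _ := by rw [hnorm.2.2.1, abs_of_pos hc]
  monotoneOn := monotoneOn_Ici_zero_of_strongLT hnorm.continuous.continuousOn
    fun y y' hy hyy' => (hmono y y' hy (hy.trans_le hyy'.le) hyy').le
  single_pos _ := hnorm.pos (Pi.single_ne_zero_iff.2 one_ne_zero)

end Norm

end MOApprox

open MOApprox in
theorem statement14_general {ι : Type*} [DecidableEq ι] [Finite ι] [Nonempty ι]
    {s : (ι → ℝ) → ℝ} (hs : IsMonotoneGauge s) :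
    (∀ ybar : ι → ℝ, StrongLT 0 ybar → s (axisIntercepts s) ≤ sSup (levelRatios s ybar)) ∧
      sSup (levelRatios s (axisIntercepts s)) = s (axisIntercepts s) := by
  refine ⟨fun ybar hybar => ?_, ?_⟩
  · rw [hs.sSup_levelRatios hybar]
    exact hs.le_mul_iSup_div hs.axisIntercepts_pos hybar
  · have div_self_eq (i : ι) : axisIntercepts s i / axisIntercepts s i = 1 :=
      div_self (hs.axisIntercepts_pos i).ne'
    simp only [hs.sSup_levelRatios hs.axisIntercepts_pos, div_self_eq, ciSup_const, mul_one]

open MOApprox in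
/-- For a strictly monotone norm `s`,
`inf_{ȳ ∈ ℝ^p_>} sup{max_i y*_i/ȳ_i : y* ∈ L(ȳ, s)} = s(1/s(e^1), …, 1/s(e^p))`,
and the infimum is attained at `ȳ = (1/s(e^1), …, 1/s(e^p))`. -/
theorem statement14 (p : ℕ) (hp : 1 ≤ p) (s : (Fin p → ℝ) → ℝ)
    (hnorm : IsNorm p s) (hmono : StrictMonoOnPos p s) :
    (∀ ybar : Fin p → ℝ, Pos p ybar →
        s (fun i => 1 / s (Pi.single i 1)) ≤
          sSup ((fun y => ⨆ i : Fin p, y i / ybar i) '' LevelSet p s ybar)) ∧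
    sSup ((fun y => ⨆ i : Fin p, y i / (1 / s (Pi.single i 1))) ''
          LevelSet p s (fun j => 1 / s (Pi.single j 1)))
      = s (fun i => 1 / s (Pi.single i 1)) := by
  have : Nonempty (Fin p) := Fin.pos_iff_nonempty.1 hp
  exact statement14_general (hnorm.isMonotoneGauge hmono)
end

section
/- Let s : ℝ^p → ℝ be a norm that is strictly monotone on the positive orthant, let Π^min := ({1,…,p}, ∅), and let S = {s_w : w ∈ ℝ^p_>} be the weighted scalarization induced by W = ℝ^p_> and the restriction of s to ℝ^p_>, where s_w(y) := s(w_1·y_1, …, w_p·y_p). Let α := s(1/s(e^1), …, 1/s(e^p)). Then in every instance of every p-objective minimization problem (i.e., every instance of type Π^min), every optimal solution set for S is an α-approximation set. -/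
/-!
Fix `x'` and choose the weights `w i = (s (e i) * f x' i)⁻¹`, so that `w * f x'` is the vector
`i ↦ (s (e i))⁻¹` whose `s`-value is the approximation factor. A solution `x` optimal for these
weights satisfies `s (w * f x) ≤ s (w * f x')`, while monotonicity bounds the single coordinate
`w i * f x i * s (e i) = f x i / f x' i` by `s (w * f x)`. Since the unit vectors lie only in the
closure of the positive orthant, monotonicity has to be extended to the boundary first, which
sublinearity allows.
-/

open scoped Classical

namespace MOApprox

open Filter Topology

/-- Sublinear functionals: positively homogeneous and subadditive. They generalize norms by giving
up symmetry and definiteness. -/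
structure IsSublinear {E : Type*} [Add E] [SMul ℝ E] (s : E → ℝ) : Prop where
  map_smul_of_pos : ∀ c : ℝ, 0 < c → ∀ y, s (c • y) = c * s y
  map_add_le : ∀ y z, s (y + z) ≤ s y + s z

/-- Monotonicity on the positive orthant along coordinatewise strict inequalities. It is implied by
both monotonicity and strict monotonicity there. -/
def WeakMonoOnPos {ι : Type*} (s : (ι → ℝ) → ℝ) : Prop :=
  ∀ ⦃y y' : ι → ℝ⦄, StrongLT 0 y → StrongLT y y' → s y ≤ s y'

lemma IsNorm.isSublinear {p : ℕ} {s : (Fin p → ℝ) → ℝ} (hs : IsNorm p s) : IsSublinear s := by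
  obtain ⟨-, -, map_smul, map_add_le⟩ := hs
  exact ⟨fun c hc y ↦ by rw [map_smul, abs_of_pos hc], map_add_le⟩

lemma IsNorm.pos_of_ne_zero {p : ℕ} {s : (Fin p → ℝ) → ℝ} (hs : IsNorm p s) {y : Fin p → ℝ}
    (hy : y ≠ 0) : 0 < s y :=
  (hs.1 y).lt_of_ne' (mt (hs.2.1 y).1 hy)

lemma StrictMonoOnPos.weakMonoOnPos {p : ℕ} {s : (Fin p → ℝ) → ℝ} (hs : StrictMonoOnPos p s) :
    WeakMonoOnPos s :=
  fun y y' hy hlt ↦ (hs y y' hy (fun i ↦ (hy i).trans (hlt i)) hlt).le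

namespace IsSublinear

variable {ι : Type*} {s : (ι → ℝ) → ℝ}

lemma map_le_map_of_nonneg_of_le (hs : IsSublinear s) (hmono : WeakMonoOnPos s) {y z : ι → ℝ}
    (hy : 0 ≤ y) (hyz : y ≤ z) (hz : StrongLT 0 z) : s y ≤ s z := by
  have perturbed_le : ∀ ε > 0, s y ≤ (1 + 2 * ε) * s z + ε * s (-z) := by
    intro ε hε
    have hεz (i : ι) : 0 < ε * z i := mul_pos hε (hz i)
    have hpos : StrongLT 0 (y + ε • z) := fun i ↦ add_pos_of_nonneg_of_pos (hy i) (hεz i)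
    have hlt : StrongLT (y + ε • z) ((1 + 2 * ε) • z) := fun i ↦ by
      simp only [Pi.add_apply, Pi.smul_apply, smul_eq_mul]
      linarith [hyz i, hεz i]
    calc s y = s ((y + ε • z) + ε • -z) := by rw [smul_neg, add_neg_cancel_right]
      _ ≤ s (y + ε • z) + s (ε • -z) := hs.map_add_le _ _
      _ ≤ s ((1 + 2 * ε) • z) + s (ε • -z) := by gcongr; exact hmono hpos hlt
      _ = (1 + 2 * ε) * s z + ε * s (-z) := by
        rw [hs.map_smul_of_pos _ (by positivity), hs.map_smul_of_pos _ hε]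
  have tendsto_bound :
      Tendsto (fun ε : ℝ ↦ (1 + 2 * ε) * s z + ε * s (-z)) (𝓝[>] 0) (𝓝 (s z)) := by
    have hcont : Continuous fun ε : ℝ ↦ (1 + 2 * ε) * s z + ε * s (-z) := by fun_prop
    simpa using (hcont.tendsto 0).mono_left nhdsWithin_le_nhds
  exact ge_of_tendsto tendsto_bound (eventually_mem_nhdsWithin.mono perturbed_le)

lemma mul_map_single_le [DecidableEq ι] (hs : IsSublinear s) (hmono : WeakMonoOnPos s)
    {z : ι → ℝ} (hz : StrongLT 0 z) (i : ι) : z i * s (Pi.single i 1) ≤ s z := by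
  have single_le : Pi.single i (z i) ≤ z := update_le_iff.2 ⟨le_rfl, fun j _ ↦ (hz j).le⟩
  calc z i * s (Pi.single i 1) = s (Pi.single i (z i)) := by
        rw [← hs.map_smul_of_pos _ (hz i), ← Pi.single_smul, smul_eq_mul, mul_one]
    _ ≤ s z := hs.map_le_map_of_nonneg_of_le hmono (Pi.single_nonneg.2 (hz i).le) single_le hz

end IsSublinear

end MOApprox

open MOApprox in
theorem statement15_general {ι X : Type*} [DecidableEq ι] {s : (ι → ℝ) → ℝ} (hs : IsSublinear s)
    (hmono : WeakMonoOnPos s) (hsingle : ∀ i, 0 < s (Pi.single i 1))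
    {f : X → ι → ℝ} (hf : ∀ x, StrongLT 0 (f x)) {P : Set X}
    (hP : ∀ w, StrongLT 0 w → ∃ x ∈ P, ∀ x', s (w * f x) ≤ s (w * f x')) (x' : X) :
    ∃ x ∈ P, f x ≤ s (fun i ↦ 1 / s (Pi.single i 1)) • f x' := by
  set w : ι → ℝ := fun i ↦ 1 / (s (Pi.single i 1) * f x' i)
  have hw : StrongLT 0 w := fun i ↦ one_div_pos.2 (mul_pos (hsingle i) (hf x' i))
  have hwx' : w * f x' = fun i ↦ 1 / s (Pi.single i 1) := by
    funext i
    have : f x' i ≠ 0 := (hf x' i).ne'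
    simp only [w, Pi.mul_apply]
    field_simp
  obtain ⟨x, hx, hopt⟩ := hP w hw
  refine ⟨x, hx, fun i ↦ (div_le_iff₀ (hf x' i)).1 ?_⟩
  calc f x i / f x' i = (w * f x) i * s (Pi.single i 1) := by
        have := (hsingle i).ne'
        simp only [w, Pi.mul_apply]
        field_simp
    _ ≤ s (w * f x) := hs.mul_map_single_le hmono (fun j ↦ mul_pos (hw j) (hf x j)) i
    _ ≤ s (w * f x') := hopt x'
    _ = s (fun i ↦ 1 / s (Pi.single i 1)) := by rw [hwx']

open MOApprox in
/-- For a strictly monotone norm `s`, the weighted scalarization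
`S = {s_w : w ∈ ℝ^p_>}` and `α := s(1/s(e^1), …, 1/s(e^p))`: in every instance
of every `p`-objective minimization problem, every optimal solution set for `S`
is an `α`-approximation set. -/
theorem statement15 (p : ℕ) (hp : 1 ≤ p) (s : (Fin p → ℝ) → ℝ)
    (hnorm : IsNorm p s) (hmono : StrictMonoOnPos p s) :
    ∀ (X : Type) (f : X → Fin p → ℝ), Nonempty X → (∀ x, Pos p (f x)) →
      IsCompact (Set.range f) →
      ∀ P : Set X,
        OptSolSet p
          ((fun (w : Fin p → ℝ) => fun (y : Fin p → ℝ) => s (fun i => w i * y i)) ''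
            {w : Fin p → ℝ | Pos p w}) f P →
        ApproxSet p Set.univ (s (fun i => 1 / s (Pi.single i 1))) f P := by
  intro X f _ hf _ P hP x'
  obtain ⟨x, hx, hle⟩ := statement15_general hnorm.isSublinear hmono.weakMonoOnPos
    (fun i ↦ hnorm.pos_of_ne_zero (by simp)) hf (fun w hw ↦ hP _ ⟨w, hw, rfl⟩) x'
  exact ⟨x, hx, fun i _ ↦ hle i, fun i hi ↦ absurd (Set.mem_univ i) hi⟩
end

section
/- Let s : ℝ^p → ℝ be a norm that is strictly monotone on the positive orthant, and let S = {s_w : w ∈ ℝ^p_>} be the weighted scalarization induced by W = ℝ^p_> and the restriction of s to ℝ^p_>, where s_w(y) := s(w_1·y_1, …, w_p·y_p). Let α := s(1/s(e^1), …, 1/s(e^p)). Then for every ε with 0 < ε < 1 there exists an instance I = (X, f) of a p-objective minimization problem (with X finite and nonempty and f(X) ⊆ ℝ^p_>) such that the set of S-supported solutions is not an (α·(1 − ε))-approximation set. -/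
open scoped Classical

/-!
Let `β = α (1 - ε)`. Against the all-ones point, play the points `β • e^i + δ • 1` with `0 < δ`
small. None of them `β`-approximates the all-ones point, because its `i`-th entry `β + δ` exceeds
`β`. Given weights `w`, let `i` minimize `w_i s(e^i)`, say with minimum `m`. Then
`w ≥ m • (1/s(e^j))_j`, so the all-ones point has value `s(w) ≥ m α`, whereas `β • e^i + δ • 1` has
value at most `β m + δ s(w)`, which is smaller because `β < α`. Hence the all-ones point is not
supported either.
-/

namespace MOApprox

/-- Monotone gauges: the weakening of "norm that is strictly monotone on the positive orthant" in
which the norm axioms concern nonnegative vectors and factors only, and definiteness is asked of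
the unit vectors only. For `1 ≤ p`, the sum of the entries is a monotone gauge but not a norm. -/
structure IsMonotoneGauge_s16 (p : ℕ) (s : (Fin p → ℝ) → ℝ) : Prop where
  smul : ∀ c : ℝ, 0 ≤ c → ∀ y, 0 ≤ y → s (c • y) = c * s y
  add_le : ∀ y z, 0 ≤ y → 0 ≤ z → s (y + z) ≤ s y + s z
  single_pos : ∀ i, 0 < s (Pi.single i 1)
  strictMonoOnPos : StrictMonoOnPos p s

/-- The constant `α = s(1/s(e^1), …, 1/s(e^p))`, below which supported solutions need not achieve
any approximation factor. -/
noncomputable def approxFactor {p : ℕ} (s : (Fin p → ℝ) → ℝ) : ℝ :=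
  s fun i => 1 / s (Pi.single i 1)

/-- The images of the `p + 1` solutions of the bad instance: the all-ones point, at index `0`, and
for each objective `i` the point `β • e^i + δ • 1`, at index `i.succ`. -/
def badInstance (p : ℕ) (β δ : ℝ) : Fin (p + 1) → Fin p → ℝ :=
  Fin.cons 1 fun i => β • Pi.single i 1 + δ • 1

section Instance

variable {p : ℕ} {β δ : ℝ}

lemma badInstance_pos (hβ : 0 ≤ β) (hδ : 0 < δ) (x : Fin (p + 1)) :
    Pos p (badInstance p β δ x) := by
  intro j
  cases x using Fin.cases with
  | zero => simp [badInstance]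
  | succ i =>
    have hsingle : (0 : Fin p → ℝ) ≤ Pi.single i 1 := Pi.single_nonneg.2 zero_le_one
    simpa [badInstance] using add_pos_of_nonneg_of_pos (mul_nonneg hβ (hsingle j)) hδ

lemma not_approximates_badInstance_succ_zero (hδ : 0 < δ) (i : Fin p) :
    ¬ Approximates p Set.univ β (badInstance p β δ) i.succ 0 := by
  rintro ⟨h, -⟩
  have hi : β + δ ≤ β := by simpa [badInstance] using h i (Set.mem_univ i)
  linarith

end Instance

section Gauge

variable {p : ℕ} {s : (Fin p → ℝ) → ℝ}

lemma Pos.nonneg {y : Fin p → ℝ} (hy : Pos p y) : 0 ≤ y := fun i => (hy i).le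

lemma Pos.smul {c : ℝ} {y : Fin p → ℝ} (hc : 0 < c) (hy : Pos p y) : Pos p (c • y) :=
  fun i => mul_pos hc (hy i)

lemma IsNorm.isMonotoneGauge_s16 (hs : IsNorm p s) (hmono : StrictMonoOnPos p s) :
    IsMonotoneGauge_s16 p s := by
  obtain ⟨hnonneg, hzero, hsmul, hadd⟩ := hs
  refine ⟨fun c hc y _ => by rw [hsmul, abs_of_nonneg hc], fun y z _ _ => hadd y z, fun i => ?_,
    hmono⟩
  have hne : (Pi.single i 1 : Fin p → ℝ) ≠ 0 := Pi.single_ne_zero_iff.2 one_ne_zero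
  exact (hnonneg _).lt_of_ne' (mt (hzero _).1 hne)

namespace IsMonotoneGauge_s16

-- For `p = 0` strict monotonicity would give `s 0 < s 0`.
lemma nonempty (hs : IsMonotoneGauge_s16 p s) : Nonempty (Fin p) := by
  by_contra hp
  rw [not_nonempty_iff] at hp
  exact lt_irrefl _ (hs.strictMonoOnPos 0 0 isEmptyElim isEmptyElim isEmptyElim)

lemma smul_lt_of_le (hs : IsMonotoneGauge_s16 p s) {c : ℝ} (hc0 : 0 < c) (hc1 : c < 1)
    {y z : Fin p → ℝ} (hy : Pos p y) (hyz : y ≤ z) : c * s y < s z := by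
  rw [← hs.smul c hc0.le y hy.nonneg]
  exact hs.strictMonoOnPos _ _ (hy.smul hc0) (fun i => (hy i).trans_le (hyz i))
    fun i => (mul_lt_of_lt_one_left (hy i) hc1).trans_le (hyz i)

lemma pos_s16 (hs : IsMonotoneGauge_s16 p s) {y : Fin p → ℝ} (hy : Pos p y) : 0 < s y := by
  have : 1 / 2 * s y < s y := hs.smul_lt_of_le (by norm_num) (by norm_num) hy le_rfl
  linarith

lemma mono (hs : IsMonotoneGauge_s16 p s) {y z : Fin p → ℝ} (hy : Pos p y) (hyz : y ≤ z) :
    s y ≤ s z := by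
  by_contra! hlt
  have hz : 0 < s z := hs.pos_s16 fun i => (hy i).trans_le (hyz i)
  have hcontra : s z / s y * s y < s z :=
    hs.smul_lt_of_le (div_pos hz (hs.pos_s16 hy)) ((div_lt_one (hs.pos_s16 hy)).2 hlt) hy hyz
  rw [div_mul_cancel₀ _ (hs.pos_s16 hy).ne'] at hcontra
  exact lt_irrefl _ hcontra

lemma pos_one_div_single (hs : IsMonotoneGauge_s16 p s) : Pos p fun i => 1 / s (Pi.single i 1) :=
  fun i => one_div_pos.2 (hs.single_pos i)

lemma approxFactor_pos (hs : IsMonotoneGauge_s16 p s) : 0 < approxFactor s :=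
  hs.pos_s16 hs.pos_one_div_single

lemma exists_mul_approxFactor_le (hs : IsMonotoneGauge_s16 p s) {w : Fin p → ℝ} (hw : Pos p w) :
    ∃ i, w i * s (Pi.single i 1) * approxFactor s ≤ s w := by
  have := hs.nonempty
  obtain ⟨i, hi⟩ := Finite.exists_min fun i => w i * s (Pi.single i 1)
  have hm : 0 < w i * s (Pi.single i 1) := mul_pos (hw i) (hs.single_pos i)
  refine ⟨i, ?_⟩
  rw [approxFactor, ← hs.smul _ hm.le _ hs.pos_one_div_single.nonneg]
  refine hs.mono (hs.pos_one_div_single.smul hm) fun j => ?_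
  rw [Pi.smul_apply, smul_eq_mul, mul_one_div, div_le_iff₀ (hs.single_pos j)]
  exact hi j

lemma weighted_badInstance_succ_le (hs : IsMonotoneGauge_s16 p s) {β δ : ℝ} (hβ : 0 ≤ β) (hδ : 0 ≤ δ)
    {w : Fin p → ℝ} (hw : Pos p w) (i : Fin p) :
    s (fun j => w j * badInstance p β δ i.succ j) ≤ β * (w i * s (Pi.single i 1)) + δ * s w := by
  have hsplit : (fun j => w j * badInstance p β δ i.succ j) =
      (β * w i) • Pi.single i 1 + δ • w := by
    ext j
    obtain rfl | hji := eq_or_ne j i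
    · simp only [badInstance, Fin.cons_succ, Pi.add_apply, Pi.smul_apply, Pi.single_eq_same,
        Pi.one_apply, smul_eq_mul]
      ring
    · simp [badInstance, hji, mul_comm]
  have hsingle : (0 : Fin p → ℝ) ≤ Pi.single i 1 := Pi.single_nonneg.2 zero_le_one
  have hβw : 0 ≤ β * w i := mul_nonneg hβ (hw i).le
  calc s (fun j => w j * badInstance p β δ i.succ j)
      ≤ s ((β * w i) • Pi.single i 1) + s (δ • w) := by
        rw [hsplit]
        exact hs.add_le _ _ (smul_nonneg hβw hsingle) (smul_nonneg hδ hw.nonneg)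
    _ = β * (w i * s (Pi.single i 1)) + δ * s w := by
        rw [hs.smul _ hβw _ hsingle, hs.smul _ hδ _ hw.nonneg, mul_assoc]

lemma not_optimalFor_badInstance_zero (hs : IsMonotoneGauge_s16 p s) {β δ : ℝ} (hβ : 0 ≤ β)
    (hδ : 0 ≤ δ) (hβδ : β + δ * approxFactor s < approxFactor s) {w : Fin p → ℝ} (hw : Pos p w) :
    ¬ OptimalFor p (fun y => s fun i => w i * y i) (badInstance p β δ) 0 := by
  intro hopt
  obtain ⟨i, hi⟩ := hs.exists_mul_approxFactor_le hw
  have hle : s w ≤ β * (w i * s (Pi.single i 1)) + δ * s w := by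
    simpa [badInstance] using (hopt i.succ).trans (hs.weighted_badInstance_succ_le hβ hδ hw i)
  refine lt_irrefl (approxFactor s * s w) ?_
  calc approxFactor s * s w
      ≤ approxFactor s * (β * (w i * s (Pi.single i 1)) + δ * s w) :=
        mul_le_mul_of_nonneg_left hle hs.approxFactor_pos.le
    _ = β * (w i * s (Pi.single i 1) * approxFactor s) + δ * approxFactor s * s w := by ring
    _ ≤ β * s w + δ * approxFactor s * s w := by gcongr
    _ = (β + δ * approxFactor s) * s w := by ring
    _ < approxFactor s * s w := mul_lt_mul_of_pos_right hβδ (hs.pos_s16 hw)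

end IsMonotoneGauge_s16

end Gauge

end MOApprox

open MOApprox in
theorem statement16_general {p : ℕ} {s : (Fin p → ℝ) → ℝ} (hs : IsMonotoneGauge_s16 p s)
    {β : ℝ} (hβ0 : 0 ≤ β) (hβ : β < approxFactor s) :
    ∃ (n : ℕ) (f : Fin (n + 1) → Fin p → ℝ), (∀ x, Pos p (f x)) ∧
      ¬ ApproxSet p Set.univ β f
        {x | ∃ w : Fin p → ℝ, Pos p w ∧
          OptimalFor p (fun y => s (fun i => w i * y i)) f x} := by
  obtain ⟨δ, hδ0, hδ⟩ := exists_between (div_pos (sub_pos.2 hβ) hs.approxFactor_pos)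
  have hβδ : β + δ * approxFactor s < approxFactor s := by
    rwa [lt_div_iff₀ hs.approxFactor_pos, lt_sub_iff_add_lt'] at hδ
  refine ⟨p, badInstance p β δ, badInstance_pos hβ0 hδ0, fun happrox => ?_⟩
  obtain ⟨x, ⟨w, hw, hopt⟩, hx⟩ := happrox 0
  cases x using Fin.cases with
  | zero => exact hs.not_optimalFor_badInstance_zero hβ0 hδ0.le hβδ hw hopt
  | succ i => exact not_approximates_badInstance_succ_zero hδ0 i hx

open MOApprox in
/-- For a strictly monotone norm `s`, the weighted scalarization
`S = {s_w : w ∈ ℝ^p_>}` and `α := s(1/s(e^1), …, 1/s(e^p))`: for every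
`0 < ε < 1` there is an instance of a `p`-objective minimization problem (with
finite nonempty feasible set and positive images) in which the set of
`S`-supported solutions is not an `(α·(1 − ε))`-approximation set. -/
theorem statement16 (p : ℕ) (hp : 1 ≤ p) (s : (Fin p → ℝ) → ℝ)
    (hnorm : IsNorm p s) (hmono : StrictMonoOnPos p s)
    (ε : ℝ) (hε0 : 0 < ε) (hε1 : ε < 1) :
    ∃ (n : ℕ) (f : Fin (n + 1) → Fin p → ℝ), (∀ x, Pos p (f x)) ∧
      ¬ ApproxSet p Set.univ (s (fun i => 1 / s (Pi.single i 1)) * (1 - ε)) f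
        {x | ∃ w : Fin p → ℝ, Pos p w ∧
          OptimalFor p (fun y => s (fun i => w i * y i)) f x} := by
  have hs := hnorm.isMonotoneGauge_s16 hmono
  exact statement16_general hs (mul_nonneg hs.approxFactor_pos.le (sub_nonneg.2 hε1.le))
    (mul_lt_of_lt_one_right hs.approxFactor_pos (sub_lt_self 1 hε0))
end
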